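/- For ℓ ∈ {5, 7, 11} and every nonnegative integer n, the partition number p(ℓn + δ_ℓ) is divisible by ℓ, where δ_ℓ is the unique integer with 0 < δ_ℓ < ℓ and 24·δ_ℓ ≡ 1 (mod ℓ). Concretely: p(5n+4) ≡ 0 (mod 5), p(7n+5) ≡ 0 (mod 7), p(11n+6) ≡ 0 (mod 11). -/

import Mathlib

/-- The partition function: the number of partitions of `n`. -/
def partitionFn (n : ℕ) : ℕ := Fintype.card (Nat.Partition n)

/-!
Let `E = ∏ (1 - X ^ i)`, which Mathlib calls `pentagonalSeries`, so that the generating series of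
the partition numbers is `P = 1 / E`. Whenever `a + 1 = ℓ * b`, we have `P = E ^ a * (P ^ b) ^ ℓ`,
and modulo `ℓ` the `ℓ`-th power only involves exponents divisible by `ℓ`. It is therefore enough
that `E ^ a` has no exponent congruent to `δ` modulo `ℓ`.

Two sparse expansions are available. By Euler's pentagonal number theorem the exponents `n` of `E`
satisfy `24 * n + 1 = (6 * k - 1) ^ 2`; by Jacobi's identity the exponents `n` of `E ^ 3` satisfy
`8 * n + 1 = (2 * j + 1) ^ 2`, with coefficient `± (2 * j + 1)`. Jacobi's identity comes from the
finite triple product, after cancelling the factor `1 + x` and setting `x = -1`.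

For `ℓ = 5` and `ℓ = 7`, write `E ^ 4 = E * E ^ 3` and `E ^ 6 = E ^ 3 * E ^ 3`. For `ℓ = 11`, take
`a = 21` and `J = E ^ 3`: five residue classes of exponents are absent from
`J ^ 4 = E * E ^ 11`, which gives five quartic relations between the residue-class parts of `J`, and
the residue-class part of `E ^ 21 = J ^ 7` to be annihilated is a combination of these relations.
-/

open PowerSeries Finset

/-! ### The finite Jacobi triple product -/

lemma succ_choose_two (n : ℕ) : (n + 1).choose 2 = n + n.choose 2 := by
  rw [Nat.choose_succ_succ' n 1, Nat.choose_one_right]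

section CommSemiring
variable {R : Type*} [CommSemiring R]

/-- The Gaussian binomial coefficient, defined by the `q`-Pascal rule, which avoids dividing by
`1 - q ^ i`. -/
def qBinomial (q : R) : ℕ → ℕ → R
  | _, 0 => 1
  | 0, _ + 1 => 0
  | n + 1, k + 1 => qBinomial q n k + q ^ (k + 1) * qBinomial q n (k + 1)

@[simp]
lemma qBinomial_zero_right (q : R) (n : ℕ) : qBinomial q n 0 = 1 := by
  cases n <;> rfl

lemma qBinomial_succ_succ (q : R) (n k : ℕ) :
    qBinomial q (n + 1) (k + 1) = qBinomial q n k + q ^ (k + 1) * qBinomial q n (k + 1) :=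
  rfl

lemma qBinomial_eq_zero_of_lt (q : R) {n k : ℕ} (h : n < k) : qBinomial q n k = 0 := by
  induction n generalizing k with
  | zero =>
    obtain ⟨k, rfl⟩ := Nat.exists_eq_add_one_of_ne_zero h.ne'
    rfl
  | succ n ih =>
    obtain ⟨k, rfl⟩ := Nat.exists_eq_add_one_of_ne_zero (Nat.ne_zero_of_lt h)
    rw [qBinomial_succ_succ, ih (by lia), ih (by lia), mul_zero, add_zero]

lemma map_qBinomial {S : Type*} [CommSemiring S] (f : R →+* S) (q : R) (n k : ℕ) :
    f (qBinomial q n k) = qBinomial (f q) n k := by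
  induction n generalizing k with
  | zero => cases k <;> simp [qBinomial]
  | succ n ih => cases k <;> simp [qBinomial, ih]

lemma sum_range_mul_pow_eq_add_mul_sum {c c' : ℕ → R} {n : ℕ} (x y : R) (hzero : c' 0 = y * c 0)
    (hsucc : ∀ k, c' (k + 1) = c k + y * c (k + 1)) (htop : c (n + 1) = 0) :
    ∑ k ∈ range (n + 2), c' k * x ^ k = (x + y) * ∑ k ∈ range (n + 1), c k * x ^ k := by
  have hsum : ∑ k ∈ range (n + 1), c k * x ^ k =
      ∑ k ∈ range (n + 1), c (k + 1) * x ^ (k + 1) + c 0 * x ^ 0 := by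
    rw [← sum_range_succ' (fun k ↦ c k * x ^ k), sum_range_succ _ (n + 1), htop, zero_mul, add_zero]
  calc ∑ k ∈ range (n + 2), c' k * x ^ k
      = ∑ k ∈ range (n + 1), (x * (c k * x ^ k) + y * (c (k + 1) * x ^ (k + 1)))
          + y * (c 0 * x ^ 0) := by
        rw [sum_range_succ', hzero, mul_assoc]
        exact congrArg₂ _ (sum_congr rfl fun k _ ↦ by rw [hsucc]; ring) rfl
    _ = x * ∑ k ∈ range (n + 1), c k * x ^ k +
          y * (∑ k ∈ range (n + 1), c (k + 1) * x ^ (k + 1) + c 0 * x ^ 0) := by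
        rw [sum_add_distrib, ← mul_sum, ← mul_sum, add_assoc, mul_add]
    _ = (x + y) * ∑ k ∈ range (n + 1), c k * x ^ k := by rw [← hsum, add_mul]

theorem prod_one_add_mul_pow_eq_sum_qBinomial (q x : R) (n : ℕ) :
    ∏ i ∈ range n, (1 + x * q ^ i) =
      ∑ k ∈ range (n + 1), q ^ k.choose 2 * qBinomial q n k * x ^ k := by
  induction n generalizing x with
  | zero => simp
  | succ n ih =>
    have hshift : ∏ i ∈ range n, (1 + x * q ^ (i + 1)) =
        ∑ k ∈ range (n + 1), q ^ (k.choose 2 + k) * qBinomial q n k * x ^ k := by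
      simp only [pow_succ', ← mul_assoc, ih (x * q), mul_pow, pow_add]
      exact sum_congr rfl fun k _ ↦ by ring
    rw [prod_range_succ', hshift, pow_zero, mul_one, mul_comm, add_comm 1 x]
    refine (sum_range_mul_pow_eq_add_mul_sum x 1 (by simp) (fun k ↦ ?_) ?_).symm
    · rw [qBinomial_succ_succ, succ_choose_two]
      ring
    · rw [qBinomial_eq_zero_of_lt q n.lt_succ_self, mul_zero]

/-- The exponent `(k - n) * (k - n - 1) / 2` of the finite triple product. The subtractions are
truncated: the first binomial coefficient vanishes for `k ≤ n`, the second one for `n < k`. -/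
def tripleProductExponent (n k : ℕ) : ℕ := (k - n).choose 2 + (n + 1 - k).choose 2

lemma tripleProductExponent_zero_left (k : ℕ) : tripleProductExponent 0 k = k.choose 2 := by
  rcases k with _ | k <;> simp [tripleProductExponent]

lemma tripleProductExponent_succ_succ (n k : ℕ) :
    tripleProductExponent (n + 1) (k + 1) = tripleProductExponent n k := by
  simp [tripleProductExponent]

lemma tripleProductExponent_succ_left_add (n k : ℕ) :
    tripleProductExponent (n + 1) k + k = tripleProductExponent n k + (n + 1) := by
  unfold tripleProductExponent
  rcases le_or_gt k n with h | h
  · obtain ⟨m, rfl⟩ := Nat.exists_eq_add_of_le h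
    simp [show k + m + 1 + 1 - k = m + 1 + 1 by lia, show k - (k + m + 1) = 0 by lia,
      show k + m + 1 - k = m + 1 by lia, succ_choose_two (m + 1)]
    lia
  · obtain ⟨m, rfl⟩ := Nat.exists_eq_add_of_le (Nat.succ_le_of_lt h)
    simp [show n + 1 + 1 - (n + 1 + m) = 1 - m by lia, show n + 1 + m - n = m + 1 by lia,
      succ_choose_two m, Nat.choose_eq_zero_of_lt (show 1 - m < 2 by lia)]
    lia

lemma tripleProductExponent_sub {n j : ℕ} (h : j ≤ n) :
    tripleProductExponent n (n - j) = (j + 1).choose 2 := by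
  simp [tripleProductExponent, show n - j - n = 0 by lia, show n + 1 - (n - j) = j + 1 by lia]

lemma tripleProductExponent_add_succ (n j : ℕ) :
    tripleProductExponent n (n + 1 + j) = (j + 1).choose 2 := by
  simp [tripleProductExponent, show n + 1 + j - n = j + 1 by lia]

/-- The **finite Jacobi triple product**. -/
theorem prod_one_add_mul_prod_add_eq_sum_qBinomial (q x : R) (m n : ℕ) :
    (∏ i ∈ range m, (1 + x * q ^ i)) * ∏ i ∈ range n, (x + q ^ (i + 1)) =
      ∑ k ∈ range (m + n + 1), q ^ tripleProductExponent n k * qBinomial q (m + n) k * x ^ k := by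
  induction n with
  | zero => simp [prod_one_add_mul_pow_eq_sum_qBinomial, tripleProductExponent_zero_left]
  | succ n ih =>
    rw [prod_range_succ, ← mul_assoc, ih, mul_comm]
    refine (sum_range_mul_pow_eq_add_mul_sum x (q ^ (n + 1)) ?_ (fun k ↦ ?_) ?_).symm
    · have hexp := tripleProductExponent_succ_left_add n 0
      rw [add_zero] at hexp
      rw [hexp, qBinomial_zero_right, qBinomial_zero_right, pow_add]
      ring
    · have hexp := tripleProductExponent_succ_left_add n (k + 1)
      rw [tripleProductExponent_succ_succ] at hexp
      rw [tripleProductExponent_succ_succ, ← add_assoc m, qBinomial_succ_succ, ← mul_assoc (q ^ _),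
        ← pow_add, add_comm (n + 1), ← hexp, pow_add]
      ring
    · rw [qBinomial_eq_zero_of_lt q (m + n).lt_succ_self, mul_zero]

end CommSemiring

section CommRing
variable {R : Type*} [CommRing R]

/-- The `q`-Pochhammer symbol `(q; q)ₙ = (1 - q) (1 - q ^ 2) ⋯ (1 - q ^ n)`. -/
def qPochhammer (q : R) (n : ℕ) : R := ∏ i ∈ range n, (1 - q ^ (i + 1))

lemma qPochhammer_succ (q : R) (n : ℕ) :
    qPochhammer q (n + 1) = qPochhammer q n * (1 - q ^ (n + 1)) :=
  prod_range_succ _ _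

lemma qBinomial_add_mul_qPochhammer_mul_qPochhammer (q : R) (k l : ℕ) :
    qBinomial q (k + l) k * qPochhammer q k * qPochhammer q l = qPochhammer q (k + l) := by
  induction h : k + l generalizing k l with
  | zero =>
    obtain ⟨rfl, rfl⟩ : k = 0 ∧ l = 0 := by lia
    simp [qPochhammer]
  | succ n ih =>
    rcases k with _ | k
    · obtain rfl : l = n + 1 := by lia
      simp [qPochhammer]
    rw [qBinomial_succ_succ, qPochhammer_succ q n]
    have hk := ih k l (by lia)
    rcases l with _ | l
    · obtain rfl : k = n := by lia
      rw [qBinomial_eq_zero_of_lt q (Nat.lt_succ_self k), qPochhammer_succ]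
      linear_combination (1 - q ^ (k + 1)) * hk
    · have hl := ih (k + 1) l (by lia)
      obtain rfl : n = k + l + 1 := by lia
      rw [qPochhammer_succ q k, qPochhammer_succ q l] at *
      linear_combination (1 - q ^ (k + 1)) * hk + q ^ (k + 1) * (1 - q ^ (l + 1)) * hl

lemma qPochhammer_X_ne_zero (n : ℕ) : qPochhammer (Polynomial.X : Polynomial ℤ) n ≠ 0 := by
  refine prod_ne_zero_iff.mpr fun i _ h ↦ ?_
  simpa using congrArg (Polynomial.eval 0) h

-- Over `ℤ[X]`, with `q = X`, the factors `(q; q)ₖ` and `(q; q)ₗ` can be cancelled.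
lemma qBinomial_add_symm (q : R) (k l : ℕ) : qBinomial q (k + l) k = qBinomial q (k + l) l := by
  have huniv : qBinomial (Polynomial.X : Polynomial ℤ) (k + l) k = qBinomial .X (k + l) l := by
    have hk := qBinomial_add_mul_qPochhammer_mul_qPochhammer (.X : Polynomial ℤ) k l
    have hl := qBinomial_add_mul_qPochhammer_mul_qPochhammer (.X : Polynomial ℤ) l k
    rw [add_comm l k] at hl
    refine mul_right_cancel₀ (mul_ne_zero (qPochhammer_X_ne_zero k) (qPochhammer_X_ne_zero l)) ?_
    linear_combination hk - hl
  simpa [map_qBinomial] using congrArg (Polynomial.eval₂RingHom (Int.castRingHom R) q) huniv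

lemma one_add_mul_prod_mul_prod_eq_sum_qBinomial (q x : R) (n : ℕ) :
    (1 + x) * ((∏ i ∈ range n, (1 + x * q ^ (i + 1))) * ∏ i ∈ range n, (x + q ^ (i + 1))) =
      ∑ j ∈ range (n + 1), q ^ (j + 1).choose 2 * qBinomial q (2 * n + 1) (n - j) *
        (x ^ (n - j) * (1 + x ^ (2 * j + 1))) := by
  have h := prod_one_add_mul_prod_add_eq_sum_qBinomial q x (n + 1) n
  rw [prod_range_succ', pow_zero, mul_one, show n + 1 + n + 1 = (n + 1) + (n + 1) by ring,
    sum_range_add, ← sum_range_reflect, ← sum_add_distrib, show n + 1 + n = 2 * n + 1 by ring] at h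
  rw [← mul_assoc, mul_comm (1 + x), h]
  refine sum_congr rfl fun j hj ↦ ?_
  have hjn : j ≤ n := Nat.lt_succ_iff.mp (mem_range.mp hj)
  have hsymm := qBinomial_add_symm q (n - j) (n + 1 + j)
  rw [show n - j + (n + 1 + j) = 2 * n + 1 by lia] at hsymm
  rw [show n + 1 - 1 - j = n - j by lia, tripleProductExponent_sub hjn,
    tripleProductExponent_add_succ, ← hsymm, show n + 1 + j = n - j + (2 * j + 1) by lia]
  ring

-- For an indeterminate `x`, the factor `1 + x` of the triple product identity can be cancelled.
lemma prod_mul_prod_eq_sum_qBinomial_mul_geom_sum (q x : R) (n : ℕ) :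
    (∏ i ∈ range n, (1 + x * q ^ (i + 1))) * ∏ i ∈ range n, (x + q ^ (i + 1)) =
      ∑ j ∈ range (n + 1), q ^ (j + 1).choose 2 * qBinomial q (2 * n + 1) (n - j) *
        (x ^ (n - j) * ∑ i ∈ range (2 * j + 1), (-x) ^ i) := by
  have hindet :
      (∏ i ∈ range n, (1 + .X * .C q ^ (i + 1))) * ∏ i ∈ range n, (.X + .C q ^ (i + 1)) =
      ∑ j ∈ range (n + 1), .C q ^ (j + 1).choose 2 * qBinomial (.C q) (2 * n + 1) (n - j) *
        (.X ^ (n - j) * ∑ i ∈ range (2 * j + 1), (-.X : Polynomial R) ^ i) := by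
    have hreg : IsLeftRegular (1 + .X : Polynomial R) := by
      simpa [add_comm] using (Polynomial.monic_X_add_C (1 : R)).isRegular.left
    refine hreg ?_
    dsimp only
    rw [one_add_mul_prod_mul_prod_eq_sum_qBinomial, mul_sum]
    refine sum_congr rfl fun j _ ↦ ?_
    have hgeom := geom_sum_mul_neg (-.X : Polynomial R) (2 * j + 1)
    rw [(odd_two_mul_add_one j).neg_pow, sub_neg_eq_add, sub_neg_eq_add] at hgeom
    rw [← hgeom]
    ring
  have heval (k : ℕ) : (qBinomial (Polynomial.C q) (2 * n + 1) k).eval x =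
        qBinomial q (2 * n + 1) k := by
    simpa using map_qBinomial (Polynomial.evalRingHom x) (.C q) (2 * n + 1) k
  simpa [Polynomial.eval_prod, Polynomial.eval_finsetSum, heval] using
    congrArg (Polynomial.eval x) hindet

/-- A finite form of **Jacobi's identity** for the cube of Euler's product. -/
theorem qPochhammer_sq_eq_sum_qBinomial (q : R) (n : ℕ) :
    qPochhammer q n ^ 2 = ∑ j ∈ range (n + 1),
      (-1) ^ j * (2 * j + 1) * q ^ (j + 1).choose 2 * qBinomial q (2 * n + 1) (n - j) := by
  have hneg : ∏ i ∈ range n, (-1 + q ^ (i + 1)) = (-1) ^ n * qPochhammer q n := by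
    simpa [qPochhammer, neg_add_eq_sub] using prod_neg (fun i ↦ 1 - q ^ (i + 1)) (s := range n)
  have h := prod_mul_prod_eq_sum_qBinomial_mul_geom_sum q (-1) n
  simp only [neg_neg, one_pow, sum_const, card_range, nsmul_one, neg_one_mul, ← sub_eq_add_neg,
    Nat.cast_add, Nat.cast_mul, Nat.cast_ofNat, Nat.cast_one] at h
  rw [← qPochhammer, hneg] at h
  calc qPochhammer q n ^ 2
      = (-1) ^ n * (qPochhammer q n * ((-1) ^ n * qPochhammer q n)) := by
        rw [mul_left_comm (qPochhammer q n), ← mul_assoc, ← mul_pow]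
        simp [sq]
    _ = _ := by
        rw [h, mul_sum]
        refine sum_congr rfl fun j hj ↦ ?_
        have hsign : (-1 : R) ^ n * (-1) ^ (n - j) = (-1) ^ j := by
          obtain ⟨l, rfl⟩ := Nat.exists_eq_add_of_le (Nat.lt_succ_iff.mp (mem_range.mp hj))
          rw [Nat.add_sub_cancel_left, pow_add, mul_assoc, ← mul_pow, neg_mul_neg, one_mul, one_pow,
            mul_one]
        rw [← hsign]
        ring

end CommRing

/-! ### Jacobi's identity for power series -/

section PentagonalSeries
variable (R : Type*) [CommRing R]

/-- The generating series `∑ p(n) X ^ n` of the partition numbers. -/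
noncomputable def partitionSeries : R⟦X⟧ := mk fun n ↦ (partitionFn n : R)

open WithPiTopology in
lemma partitionSeries_mul_pentagonalSeries : partitionSeries R * pentagonalSeries R = 1 := by
  nontriviality R
  let _ : TopologicalSpace R := ⊥
  have : DiscreteTopology R := ⟨rfl⟩
  have hpartition : HasProd (fun i ↦ ∑' j : ℕ, X ^ ((i + 1) * j)) (partitionSeries R) := by
    simpa [partitionSeries, partitionFn, Nat.Partition.restricted] using
      Nat.Partition.hasProd_powerSeriesMk_card_restricted R (fun _ ↦ True)
  have hgeom (i : ℕ) : (∑' j : ℕ, (X : R⟦X⟧) ^ ((i + 1) * j)) * (1 - X ^ (i + 1)) = 1 := by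
    simp only [pow_mul]
    exact tsum_pow_mul_one_sub_of_constantCoeff_eq_zero (by simp)
  have hmul := hpartition.mul (hasProd_one_sub_X_pow R)
  simp only [hgeom] at hmul
  exact hmul.unique hasProd_one

variable {R} in
lemma dvd_prod_sub_one {ι : Type*} {s : Finset ι} {f : ι → R} {d : R}
    (h : ∀ i ∈ s, d ∣ f i - 1) : d ∣ ∏ i ∈ s, f i - 1 := by
  refine prod_induction f (d ∣ · - 1) (fun a b ha hb ↦ ?_) (by simp) h
  rw [show a * b - 1 = (a - 1) * b + (b - 1) by ring]
  exact (ha.mul_right b).add hb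

lemma X_pow_dvd_pentagonalSeries_sub_qPochhammer (n : ℕ) :
    X ^ (n + 1) ∣ pentagonalSeries R - qPochhammer X n := by
  refine X_pow_dvd_iff.mpr fun m hm ↦ ?_
  obtain ⟨s, hs⟩ := Filter.eventually_atTop.mp (coeff_prod_one_sub_X_pow_eventually_eq R m)
  have hprod : X ^ (n + 1) ∣ ∏ i ∈ s \ range n, (1 - X ^ (i + 1) : R⟦X⟧) - 1 := by
    refine dvd_prod_sub_one fun i hi ↦ ?_
    have hni : n ≤ i := by simpa using (mem_sdiff.mp hi).2
    simpa using pow_dvd_pow (X : R⟦X⟧) (Nat.succ_le_succ hni)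
  have hcoeff := X_pow_dvd_iff.mp (hprod.mul_right (qPochhammer X n)) m hm
  rw [sub_mul, one_mul, qPochhammer, ← prod_union sdiff_disjoint, sdiff_union_self_eq_union]
    at hcoeff
  rwa [map_sub, ← hs (s ∪ range n) subset_union_left, ← map_sub]

lemma X_pow_dvd_pentagonalSeries_mul_qBinomial_sub_one {k l : ℕ} (hkl : k ≤ l) :
    X ^ (k + 1) ∣ pentagonalSeries R * qBinomial X (k + l) k - 1 := by
  have hdvd {m : ℕ} (hm : k ≤ m) := (pow_dvd_pow X (Nat.succ_le_succ hm)).trans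
    (X_pow_dvd_pentagonalSeries_sub_qPochhammer R m)
  have hunit : IsUnit (pentagonalSeries R) :=
    IsUnit.of_mul_eq_one_right _ (partitionSeries_mul_pentagonalSeries R)
  have hB := qBinomial_add_mul_qPochhammer_mul_qPochhammer (X : R⟦X⟧) k l
  set E := pentagonalSeries R
  set B := qBinomial (X : R⟦X⟧) (k + l) k
  -- Modulo `X ^ (k + 1)` the formula for `B` reads `B * E * E = E`, and `E` is a unit.
  refine hunit.dvd_mul_left.mp ?_
  rw [show E * (E * B - 1) = B * E * (E - qPochhammer X l) +
    B * qPochhammer X l * (E - qPochhammer X k) - (E - qPochhammer X (k + l)) by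
      linear_combination hB]
  exact (((hdvd hkl).mul_left _).add ((hdvd le_rfl).mul_left _)).sub
    (hdvd (Nat.le_add_right k l))

/-- **Jacobi's identity** for the cube of Euler's product, modulo a power of `X`. -/
theorem X_pow_dvd_pentagonalSeries_pow_three_sub_sum (n : ℕ) :
    X ^ (n + 1) ∣ pentagonalSeries R ^ 3 -
      ∑ j ∈ range (n + 1), (-1) ^ j * (2 * (j : R⟦X⟧) + 1) * X ^ (j + 1).choose 2 := by
  set E := pentagonalSeries R
  have hsum : E * qPochhammer X n ^ 2 -
      ∑ j ∈ range (n + 1), (-1) ^ j * (2 * (j : R⟦X⟧) + 1) * X ^ (j + 1).choose 2 =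
      ∑ j ∈ range (n + 1), (-1) ^ j * (2 * (j : R⟦X⟧) + 1) *
        (X ^ (j + 1).choose 2 * (E * qBinomial X (2 * n + 1) (n - j) - 1)) := by
    rw [qPochhammer_sq_eq_sum_qBinomial, mul_sum, ← sum_sub_distrib]
    exact sum_congr rfl fun j _ ↦ by ring
  rw [show E ^ 3 = (E - qPochhammer X n) * (E * (E + qPochhammer X n)) + E * qPochhammer X n ^ 2 by
    ring, add_sub_assoc, hsum]
  refine ((X_pow_dvd_pentagonalSeries_sub_qPochhammer R n).mul_right _).add
    (dvd_sum fun j hj ↦ Dvd.dvd.mul_left ?_ _)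
  have hjn : j ≤ n := Nat.lt_succ_iff.mp (mem_range.mp hj)
  have hdvd := mul_dvd_mul_left (X ^ (j + 1).choose 2)
    (X_pow_dvd_pentagonalSeries_mul_qBinomial_sub_one R (k := n - j) (l := n + 1 + j) (by lia))
  rw [← pow_add, show n - j + (n + 1 + j) = 2 * n + 1 by lia] at hdvd
  have hchoose := succ_choose_two j
  exact (pow_dvd_pow X (by lia)).trans hdvd

lemma coeff_pentagonalSeries_pow_three (n : ℕ) :
    coeff n (pentagonalSeries R ^ 3) =
      ∑ j ∈ range (n + 1), if n = (j + 1).choose 2 then (-1) ^ j * (2 * (j : R) + 1) else 0 := by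
  have hcoeff := X_pow_dvd_iff.mp (X_pow_dvd_pentagonalSeries_pow_three_sub_sum R n)
    n n.lt_succ_self
  rw [map_sub, sub_eq_zero, map_sum] at hcoeff
  rw [hcoeff]
  refine sum_congr rfl fun j _ ↦ ?_
  rw [show (-1) ^ j * (2 * (j : R⟦X⟧) + 1) = C ((-1) ^ j * (2 * (j : R) + 1)) by simp [map_ofNat],
    coeff_C_mul, coeff_X_pow, mul_ite, mul_one, mul_zero]

end PentagonalSeries

/-! ### Residue classes of exponents -/

section ResiduePart
variable {R : Type*} {m : ℕ}

section CommSemiring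
variable [CommSemiring R]

/-- The part of a power series supported on the exponents in the residue class `r` modulo `m`. -/
noncomputable def residuePart (r : ZMod m) (f : R⟦X⟧) : R⟦X⟧ :=
  mk fun n ↦ if (n : ZMod m) = r then coeff n f else 0

lemma coeff_residuePart (r : ZMod m) (f : R⟦X⟧) (n : ℕ) :
    coeff n (residuePart r f) = if (n : ZMod m) = r then coeff n f else 0 :=
  coeff_mk _ _

lemma residuePart_eq_zero_iff {r : ZMod m} {f : R⟦X⟧} :
    residuePart r f = 0 ↔ ∀ n : ℕ, (n : ZMod m) = r → coeff n f = 0 := by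
  simp [PowerSeries.ext_iff, coeff_residuePart]

lemma residuePart_mul_eq_sum {S : Finset (ZMod m)} {f : R⟦X⟧}
    (hf : ∀ s ∉ S, residuePart s f = 0) (r : ZMod m) (g : R⟦X⟧) :
    residuePart r (f * g) = ∑ s ∈ S, residuePart s f * residuePart (r - s) g := by
  ext n
  simp only [coeff_residuePart, map_sum, coeff_mul]
  rw [sum_comm, ite_sum_zero]
  refine sum_congr rfl fun x hx ↦ ?_
  simp only [ite_mul, zero_mul, sum_ite_eq]
  rw [← mem_antidiagonal.mp hx, Nat.cast_add, mul_ite, mul_zero]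
  by_cases hS : (x.1 : ZMod m) ∈ S
  · simp only [if_pos hS, eq_sub_iff_add_eq']
  · rw [if_neg hS, residuePart_eq_zero_iff.mp (hf _ hS) x.1 rfl, zero_mul, ite_self]

lemma residuePart_mul_eq_zero {r : ZMod m} {f g : R⟦X⟧}
    (h : ∀ s, residuePart s f = 0 ∨ residuePart (r - s) g = 0) : residuePart r (f * g) = 0 := by
  refine residuePart_eq_zero_iff.mpr fun n hn ↦ ?_
  rw [coeff_mul]
  refine sum_eq_zero fun x hx ↦ ?_
  have hx₂ : (x.2 : ZMod m) = r - x.1 := by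
    rw [← hn, ← mem_antidiagonal.mp hx, Nat.cast_add, add_sub_cancel_left]
  rcases h x.1 with hf | hg
  · rw [residuePart_eq_zero_iff.mp hf x.1 rfl, zero_mul]
  · rw [residuePart_eq_zero_iff.mp hg x.2 hx₂, mul_zero]

end CommSemiring

section CommRing
variable [CommRing R]

lemma coeff_pow_char_eq_zero (p : ℕ) [Fact p.Prime] [CharP R p] (f : R⟦X⟧) {n : ℕ} (hn : ¬ p ∣ n) :
    coeff n (f ^ p) = 0 := by
  have hp : p ≠ 0 := (Fact.out : p.Prime).ne_zero
  have hexpand : PowerSeries.map (frobenius R p) (expand p hp f) = f ^ p :=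
    MvPowerSeries.map_frobenius_expand p hp
  rw [← hexpand, coeff_map, coeff_expand, if_neg hn, map_zero]

lemma residuePart_mul_pow_char {p : ℕ} [Fact p.Prime] [CharP R p] (r : ZMod p) (f g : R⟦X⟧) :
    residuePart r (f * g ^ p) = residuePart r f * g ^ p := by
  have hne {n : ℕ} (hn : (n : ZMod p) ≠ 0) : coeff n (g ^ p) = 0 :=
    coeff_pow_char_eq_zero p g (mt (ZMod.natCast_eq_zero_iff n p).mpr hn)
  have hself : residuePart (0 : ZMod p) (g ^ p) = g ^ p := by
    ext n
    rw [coeff_residuePart]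
    exact ite_eq_left_iff.mpr fun hn ↦ (hne hn).symm
  have hsupp : ∀ s ∉ ({0} : Finset (ZMod p)), residuePart s (g ^ p) = 0 := fun s hs ↦
    residuePart_eq_zero_iff.mpr fun n hn ↦ hne (hn ▸ notMem_singleton.mp hs)
  rw [mul_comm, residuePart_mul_eq_sum hsupp, sum_singleton, sub_zero, hself, mul_comm]

-- The pentagonal numbers `n = k (3 k - 1) / 2` satisfy `24 n + 1 = (6 k - 1) ^ 2`.
lemma residuePart_pentagonalSeries_eq_zero {r : ZMod m} (hr : ∀ x : ZMod m, x ^ 2 ≠ 24 * r + 1) :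
    residuePart r (pentagonalSeries R) = 0 := by
  refine residuePart_eq_zero_iff.mpr fun n hn ↦ coeff_pentagonalSeries_eq_zero R ?_
  rintro ⟨k, rfl⟩
  have hk := congrArg (Int.cast : ℤ → ZMod m) (two_mul_natCast_pentagonal k)
  push_cast at hk
  refine hr (6 * k - 1) ?_
  rw [← hn]
  linear_combination -12 * hk

lemma eight_mul_succ_choose_two_add_one (j : ℕ) : 8 * (j + 1).choose 2 + 1 = (2 * j + 1) ^ 2 := by
  induction j with
  | zero => simp
  | succ j ih =>
    rw [succ_choose_two (j + 1)]
    linarith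

lemma residuePart_pentagonalSeries_pow_three_eq_zero [CharP R m] {r : ZMod m}
    (hr : ∀ x : ZMod m, x ^ 2 = 8 * r + 1 → x = 0) :
    residuePart r (pentagonalSeries R ^ 3) = 0 := by
  refine residuePart_eq_zero_iff.mpr fun n hn ↦ ?_
  rw [coeff_pentagonalSeries_pow_three]
  refine sum_eq_zero fun j _ ↦ ite_eq_right_iff.mpr fun hj ↦ ?_
  have hsq := congrArg (Nat.cast (R := ZMod m)) (eight_mul_succ_choose_two_add_one j)
  rw [← hj] at hsq
  push_cast [hn] at hsq
  have hdvd := (ZMod.natCast_eq_zero_iff _ m).mp (hr (2 * j + 1 : ℕ) (mod_cast hsq.symm))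
  have hweight : (2 * (j : R) + 1) = 0 := mod_cast (CharP.cast_eq_zero_iff R m _).mpr hdvd
  rw [hweight, mul_zero]

lemma residuePart_partitionSeries_eq_zero {p : ℕ} [Fact p.Prime] [CharP R p] {r : ZMod p} {a b : ℕ}
    (hab : a + 1 = p * b) (h : residuePart r (pentagonalSeries R ^ a) = 0) :
    residuePart r (partitionSeries R) = 0 := by
  have hP : partitionSeries R = pentagonalSeries R ^ a * (partitionSeries R ^ b) ^ p := by
    rw [← pow_mul, mul_comm b, ← hab, pow_succ, ← mul_assoc, ← mul_pow,
      mul_comm (pentagonalSeries R), partitionSeries_mul_pentagonalSeries, one_pow, one_mul]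
  rw [hP, residuePart_mul_pow_char, h, zero_mul]

end CommRing

lemma partitionFn_mod_eq_zero {r : ℕ} (h : residuePart (r : ZMod m) (partitionSeries (ZMod m)) = 0)
    (n : ℕ) : partitionFn (m * n + r) % m = 0 := by
  have hcoeff := residuePart_eq_zero_iff.mp h (m * n + r) (by simp)
  rw [partitionSeries, coeff_mk, ZMod.natCast_eq_zero_iff] at hcoeff
  exact Nat.mod_eq_zero_of_dvd hcoeff

end ResiduePart

/-! ### The primes 5, 7 and 11 -/

section SmallPrimes

instance fact_prime_five : Fact (Nat.Prime 5) := ⟨by norm_num⟩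
instance fact_prime_seven : Fact (Nat.Prime 7) := ⟨by norm_num⟩
instance fact_prime_eleven : Fact (Nat.Prime 11) := ⟨by norm_num⟩

variable {R : Type*} [CommRing R]

-- An exponent `n` of `E * E ^ 3` satisfies `24 * n + 4 = x ^ 2 + 3 * y ^ 2`. If this vanishes
-- modulo `5`, then so does the weight `y` of the term from `E ^ 3`: `-3` is not a square.
lemma residuePart_partitionSeries_five [CharP R 5] :
    residuePart (4 : ZMod 5) (partitionSeries R) = 0 := by
  refine residuePart_partitionSeries_eq_zero (a := 4) (b := 1) rfl ?_
  have hres : ∀ s : ZMod 5, (∀ x : ZMod 5, x ^ 2 ≠ 24 * s + 1) ∨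
      ∀ y : ZMod 5, y ^ 2 = 8 * (4 - s) + 1 → y = 0 := by decide
  rw [pow_succ' _ 3]
  exact residuePart_mul_eq_zero fun s ↦ (hres s).imp residuePart_pentagonalSeries_eq_zero
    residuePart_pentagonalSeries_pow_three_eq_zero

-- Here `8 * n + 2 = x ^ 2 + y ^ 2`, and `-1` is not a square modulo `7`.
lemma residuePart_partitionSeries_seven [CharP R 7] :
    residuePart (5 : ZMod 7) (partitionSeries R) = 0 := by
  refine residuePart_partitionSeries_eq_zero (a := 6) (b := 1) rfl ?_
  have hres : ∀ s : ZMod 7, (∀ x : ZMod 7, x ^ 2 = 8 * s + 1 → x = 0) ∨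
      ∀ y : ZMod 7, y ^ 2 = 8 * (5 - s) + 1 → y = 0 := by decide
  rw [pow_add _ 3 3]
  exact residuePart_mul_eq_zero fun s ↦ (hres s).imp residuePart_pentagonalSeries_pow_three_eq_zero
    residuePart_pentagonalSeries_pow_three_eq_zero

lemma residuePart_mul_of_triangular_support {f : R⟦X⟧}
    (hf : ∀ s ∉ ({0, 1, 3, 6, 10} : Finset (ZMod 11)), residuePart s f = 0) (r : ZMod 11)
    (g : R⟦X⟧) :
    residuePart r (f * g) =
      residuePart (0 : ZMod 11) f * residuePart r g +
      residuePart (1 : ZMod 11) f * residuePart (r - 1) g +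
      residuePart (3 : ZMod 11) f * residuePart (r - 3) g +
      residuePart (6 : ZMod 11) f * residuePart (r - 6) g +
      residuePart (10 : ZMod 11) f * residuePart (r - 10) g := by
  rw [residuePart_mul_eq_sum hf, sum_insert (by decide), sum_insert (by decide),
    sum_insert (by decide), sum_insert (by decide), sum_singleton, sub_zero]
  ring

-- The five relations, the summands of each bracket in the conclusion and the terms of the
-- certificate are permuted cyclically by `a → c → b → d → e → a`.
lemma septic_form_eq_zero [CharP R 11] {a b c d e : R}
    (h₃ : 2 * a ^ 3 * c + 3 * b ^ 2 * d ^ 2 + 2 * a * b ^ 3 + 2 * d * e ^ 3 + 12 * a * b * c * e +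
      6 * c * d ^ 2 * e = 0)
    (h₆ : 2 * b ^ 3 * c + 3 * a ^ 2 * c ^ 2 + 2 * d ^ 3 * e + 2 * a ^ 3 * d + 12 * a * b * d * e +
      6 * b * c ^ 2 * e = 0)
    (h₈ : 2 * a * e ^ 3 + 3 * b ^ 2 * c ^ 2 + 2 * c ^ 3 * e + 2 * b * d ^ 3 + 12 * a * c * d * e +
      6 * a * b ^ 2 * d = 0)
    (h₉ : 2 * b ^ 3 * d + 3 * a ^ 2 * e ^ 2 + 2 * b * e ^ 3 + 2 * a * c ^ 3 + 12 * b * c * d * e +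
      6 * a ^ 2 * c * d = 0)
    (h₁₀ : 2 * b * c ^ 3 + 3 * d ^ 2 * e ^ 2 + 2 * c * d ^ 3 + 2 * a ^ 3 * e + 12 * a * b * c * d +
      6 * a * b * e ^ 2 = 0) :
    (a ^ 6 * d + c ^ 6 * e + b ^ 6 * a + d ^ 6 * c + e ^ 6 * b) +
      3 * (a ^ 5 * c ^ 2 + c ^ 5 * b ^ 2 + b ^ 5 * d ^ 2 + d ^ 5 * e ^ 2 + e ^ 5 * a ^ 2) +
      20 * (a ^ 3 * b ^ 3 * c + c ^ 3 * d ^ 3 * b + b ^ 3 * e ^ 3 * d + d ^ 3 * a ^ 3 * e +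
        e ^ 3 * c ^ 3 * a) +
      30 * (a ^ 4 * b * d * e + c ^ 4 * d * e * a + b ^ 4 * e * a * c + d ^ 4 * a * c * b +
        e ^ 4 * c * b * d) +
      60 * (a ^ 3 * b * c ^ 2 * e + c ^ 3 * d * b ^ 2 * a + b ^ 3 * e * d ^ 2 * c +
        d ^ 3 * a * e ^ 2 * b + e ^ 3 * c * a ^ 2 * d) +
      90 * (a ^ 2 * b ^ 2 * c * d ^ 2 + c ^ 2 * d ^ 2 * b * e ^ 2 + b ^ 2 * e ^ 2 * d * a ^ 2 +
        d ^ 2 * a ^ 2 * e * c ^ 2 + e ^ 2 * c ^ 2 * a * b ^ 2) = 0 := by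
  linear_combination (norm := (ring_nf; reduce_mod_char!))
    -(2 * a ^ 2 * c + 5 * b ^ 3 + 5 * b * c * e) * h₃ -
      (2 * d ^ 2 * e + 5 * a ^ 3 + 5 * a * b * e) * h₆ -
      (2 * a * e ^ 2 + 5 * c ^ 3 + 5 * a * c * d) * h₈ -
      (2 * b ^ 2 * d + 5 * e ^ 3 + 5 * c * d * e) * h₉ -
      (2 * b * c ^ 2 + 5 * d ^ 3 + 5 * a * b * d) * h₁₀

lemma residuePart_six_pow_seven_eq_zero [CharP R 11] {f : R⟦X⟧}
    (hf : ∀ s ∉ ({0, 1, 3, 6, 10} : Finset (ZMod 11)), residuePart s f = 0)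
    (hf₄ : ∀ s ∈ ({3, 6, 8, 9, 10} : Finset (ZMod 11)), residuePart s (f ^ 4) = 0) :
    residuePart (6 : ZMod 11) (f ^ 7) = 0 := by
  have hmem : ∀ s, s ∈ ({0, 1, 2, 3, 4, 5, 6, 7, 8, 9, 10} : Finset (ZMod 11)) := by decide
  rw [show f ^ 7 = f ^ 4 * f ^ 3 by ring, residuePart_mul_eq_sum fun s hs ↦ absurd (hmem s) hs]
  repeat rw [sum_insert (by decide)]
  rw [sum_singleton]
  simp only [show f ^ 4 = f * (f * (f * f)) by ring, show f ^ 3 = f * (f * f) by ring] at hf₄ ⊢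
  have h₃ := hf₄ 3 (by decide)
  have h₆ := hf₄ 6 (by decide)
  have h₈ := hf₄ 8 (by decide)
  have h₉ := hf₄ 9 (by decide)
  have h₁₀ := hf₄ 10 (by decide)
  clear hmem
  simp only [residuePart_mul_of_triangular_support hf] at h₃ h₆ h₈ h₉ h₁₀ ⊢
  reduce_mod_char at *
  simp only [hf 2 (by decide), hf 4 (by decide), hf 5 (by decide), hf 7 (by decide),
    hf 8 (by decide), hf 9 (by decide), mul_zero, add_zero, zero_add] at h₃ h₆ h₈ h₉ h₁₀ ⊢
  generalize residuePart (0 : ZMod 11) f = a at *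
  generalize residuePart (1 : ZMod 11) f = b at *
  generalize residuePart (3 : ZMod 11) f = c at *
  generalize residuePart (6 : ZMod 11) f = d at *
  generalize residuePart (10 : ZMod 11) f = e at *
  have : CharP R⟦X⟧ 11 := charP_of_injective_ringHom C_injective 11
  have hseptic := septic_form_eq_zero (a := a) (b := b) (c := c) (d := d) (e := e)
    (by linear_combination (norm := (ring_nf; reduce_mod_char!)) 6 * h₃)
    (by linear_combination (norm := (ring_nf; reduce_mod_char!)) 6 * h₆)
    (by linear_combination (norm := (ring_nf; reduce_mod_char!)) 6 * h₈)
    (by linear_combination (norm := (ring_nf; reduce_mod_char!)) 6 * h₉)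
    (by linear_combination (norm := (ring_nf; reduce_mod_char!)) 6 * h₁₀)
  linear_combination 7 * hseptic

lemma residuePart_partitionSeries_eleven [CharP R 11] :
    residuePart (6 : ZMod 11) (partitionSeries R) = 0 := by
  refine residuePart_partitionSeries_eq_zero (a := 21) (b := 2) rfl ?_
  rw [pow_mul _ 3 7]
  refine residuePart_six_pow_seven_eq_zero (fun s hs ↦ ?_) fun s hs ↦ ?_
  · refine residuePart_pentagonalSeries_pow_three_eq_zero ?_
    revert s
    decide
  · rw [← pow_mul, pow_succ' _ 11, residuePart_mul_pow_char,
      residuePart_pentagonalSeries_eq_zero, zero_mul]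
    revert s
    decide

end SmallPrimes

/-- Ramanujan's congruences: for ℓ ∈ {5,7,11} and the unique 0 < δ < ℓ with
24δ ≡ 1 (mod ℓ), we have p(ℓn + δ) ≡ 0 (mod ℓ). -/
theorem ramanujan_congruences :
    (∀ ℓ ∈ ({5, 7, 11} : Finset ℕ), ∀ δ : ℕ, 0 < δ → δ < ℓ → 24 * δ % ℓ = 1 →
      ∀ n : ℕ, partitionFn (ℓ * n + δ) % ℓ = 0) ∧
    (∀ n : ℕ, partitionFn (5 * n + 4) % 5 = 0 ∧
      partitionFn (7 * n + 5) % 7 = 0 ∧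
      partitionFn (11 * n + 6) % 11 = 0) := by
  have h₅ := partitionFn_mod_eq_zero (m := 5) (r := 4) residuePart_partitionSeries_five
  have h₇ := partitionFn_mod_eq_zero (m := 7) (r := 5) residuePart_partitionSeries_seven
  have h₁₁ := partitionFn_mod_eq_zero (m := 11) (r := 6) residuePart_partitionSeries_eleven
  refine ⟨fun ℓ hℓ δ h₀ hδ h n ↦ ?_, fun n ↦ ⟨h₅ n, h₇ n, h₁₁ n⟩⟩
  simp only [mem_insert, mem_singleton] at hℓ
  rcases hℓ with rfl | rfl | rfl
  · obtain rfl : δ = 4 := by omega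
    exact h₅ n
  · obtain rfl : δ = 5 := by omega
    exact h₇ n
  · obtain rfl : δ = 6 := by omega
    exact h₁₁ n
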